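/- Let k ≥ 1 be an integer and let x be a real number with 0 < x < 1/3, and set t = (1−x)/(2x). Then the series ∑_{n=0}^{∞} sw_{n,k} xⁿ converges and equals 1 + x(k − (3k+2)x)/(1−3x)² + (2x²/(1−3x)²) · (1 + U_{k−1}(t))/U_k(t). -/

import Mathlib

/-!
Transfer-matrix proof. Let `W n i` be the number of words `σ` of length `n` for which `iσ` is
smooth. Deleting the first letter gives `W (n+1) i = ∑ W n j` over the letters `j` with
`|j - i| ≤ 1` (`wordCount_succ`), so the generating functions
`g i = ∑ W n i x^(n+1)` should satisfy `g i = x + x (g (i-1) + g i + g (i+1))` for `1 ≤ i ≤ k`,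
with `g 0 = g (k+1) = 0`. This boundary value problem is solved explicitly by
`g i = x/(1-3x) * (1 - (U_{i-1} + U_{k-i}) / U_k)` at `t = (1-x)/(2x)`: the constant `x/(1-3x)`
solves the inhomogeneous equation, and `U` satisfies the homogeneous one, `v (i-1) + v (i+1) = 2t v i`
(`sol_eq`).

Convergence to this solution needs no separate uniqueness argument: the difference between `g` and
the `N`-th partial sum is multiplied by `x` times the adjacency operator when `N` increases by one,
and each letter has at most three neighbours (itself included), so the difference is
`O((3x)^N)` (`remainder_bound`).
Finally `∑_i g i` is evaluated by `(2t-2) ∑_{m<k} U_m = U_k - U_{k-1} - 1` (`sum_cheb`).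
-/

open Real Filter Finset

/-- A word of length `n` over a `k`-letter alphabet (represented as `Fin k`,
a relabeling of `{1,…,k}`) is smooth if adjacent letters differ by at most 1. -/
def IsSmooth {n k : ℕ} (σ : Fin n → Fin k) : Prop :=
  ∀ i : ℕ, ∀ hi : i + 1 < n,
    |((σ ⟨i + 1, hi⟩ : ℕ) : ℤ) - ((σ ⟨i, Nat.lt_of_succ_lt hi⟩ : ℕ) : ℤ)| ≤ 1

/-- A word is smooth cyclic if it is smooth and its last and first letters differ
by at most 1. -/
def IsSmoothCyclic {n k : ℕ} (σ : Fin n → Fin k) : Prop :=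
  IsSmooth σ ∧ ∀ h : 0 < n,
    |((σ ⟨n - 1, Nat.sub_lt h Nat.one_pos⟩ : ℕ) : ℤ) - ((σ ⟨0, h⟩ : ℕ) : ℤ)| ≤ 1

/-- `sw n k` is the number of smooth words of length `n` over a `k`-letter alphabet. -/
noncomputable def sw (n k : ℕ) : ℕ := Nat.card {σ : Fin n → Fin k // IsSmooth σ}

/-- `scw n k` is the number of smooth cyclic words of length `n` over a `k`-letter
alphabet. -/
noncomputable def scw (n k : ℕ) : ℕ := Nat.card {σ : Fin n → Fin k // IsSmoothCyclic σ}

/-- Two words are rotation equivalent if one is a cyclic rotation of the other. -/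
def RotEquiv {n k : ℕ} (σ τ : Fin n → Fin k) : Prop :=
  ∃ r : Fin n, ∀ i : Fin n, σ i = τ (i + r)

/-- `sn n k` is the number of smooth necklaces of length `n` over a `k`-letter
alphabet, i.e. the number of rotation-equivalence classes of smooth cyclic words. -/
noncomputable def sn (n k : ℕ) : ℕ :=
  Nat.card (Quot (fun σ τ : {σ : Fin n → Fin k // IsSmoothCyclic σ} => RotEquiv σ.1 τ.1))

/-- `swF n k i` is the number of smooth words of length `n` over the alphabet
`{1,…,k}` whose first letter is `i` (letters of `Fin k` are `1`-indexed via `+1`). -/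
noncomputable def swF (n k i : ℕ) : ℕ :=
  Nat.card {σ : Fin n → Fin k // IsSmooth σ ∧ ∀ h : 0 < n, (σ ⟨0, h⟩ : ℕ) + 1 = i}

/-- `swFL n k i j` is the number of smooth words of length `n` over the alphabet
`{1,…,k}` with first letter `i` and last letter `j`. -/
noncomputable def swFL (n k i j : ℕ) : ℕ :=
  Nat.card {σ : Fin n → Fin k // IsSmooth σ ∧ ∀ h : 0 < n,
    (σ ⟨0, h⟩ : ℕ) + 1 = i ∧ (σ ⟨n - 1, Nat.sub_lt h Nat.one_pos⟩ : ℕ) + 1 = j}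

/-- Chebyshev polynomial of the second kind, as a real function, with integer index. -/
noncomputable def Ueval (r : ℤ) (t : ℝ) : ℝ := (Polynomial.Chebyshev.U ℝ r).eval t

/-! ### Counting smooth words by their first letter -/

/-- Two letters may be adjacent in a smooth word. -/
def Near {k : ℕ} (i j : Fin k) : Prop := |((j : ℕ) : ℤ) - ((i : ℕ) : ℤ)| ≤ 1

open Classical in
/-- The number, as a real, of words `σ` of length `n` such that `i` followed by `σ` is smooth;
that is, the number of smooth words of length `n + 1` with first letter `i`. -/
noncomputable def wordCount {k : ℕ} (n : ℕ) (i : Fin k) : ℝ :=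
  ∑ σ : Fin n → Fin k, if IsSmooth (Fin.cons i σ : Fin (n + 1) → Fin k) then 1 else 0

lemma isSmooth_cons {n k : ℕ} (i : Fin k) (τ : Fin (n + 1) → Fin k) :
    IsSmooth (Fin.cons i τ : Fin (n + 2) → Fin k) ↔ Near i (τ 0) ∧ IsSmooth τ := by
  have e (m : ℕ) (hm : m + 1 < n + 2) :
      (Fin.cons i τ : Fin (n + 2) → Fin k) ⟨m + 1, hm⟩ = τ ⟨m, by omega⟩ := rfl
  have e0 : (Fin.cons i τ : Fin (n + 2) → Fin k) ⟨0, by omega⟩ = i := rfl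
  unfold IsSmooth Near
  constructor
  · intro h
    refine ⟨?_, fun m hm => ?_⟩
    · have := h 0 (by omega)
      rwa [e 0, e0] at this
    · have := h (m + 1) (by omega)
      rwa [e (m + 1), e m] at this
  · rintro ⟨h0, h⟩ m hm
    cases m with
    | zero => rw [e 0, e0]; exact h0
    | succ m => rw [e (m + 1), e m]; exact h m (by omega)

lemma sum_cons {n k : ℕ} (F : (Fin (n + 1) → Fin k) → ℝ) :
    ∑ σ, F σ = ∑ i : Fin k, ∑ τ : Fin n → Fin k, F (Fin.cons i τ) := by
  rw [← Fintype.sum_prod_type' (f := fun i (τ : Fin n → Fin k) => F (Fin.cons i τ))]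
  exact ((Fin.consEquiv (fun _ : Fin (n + 1) => Fin k)).sum_comp F).symm

lemma wordCount_zero {k : ℕ} (i : Fin k) : wordCount 0 i = 1 := by
  have h (σ : Fin 0 → Fin k) : IsSmooth (Fin.cons i σ : Fin 1 → Fin k) :=
    fun m hm => absurd hm (by omega)
  simp [wordCount, h]

open Classical in
lemma wordCount_succ {k : ℕ} (n : ℕ) (i : Fin k) :
    wordCount (n + 1) i = ∑ j : Fin k, if Near i j then wordCount n j else 0 := by
  rw [wordCount, sum_cons]
  refine Finset.sum_congr rfl fun j _ => ?_
  by_cases h : Near i j <;> simp [isSmooth_cons, h, wordCount]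

lemma wordCount_nonneg {k : ℕ} (n : ℕ) (i : Fin k) : 0 ≤ wordCount n i :=
  Finset.sum_nonneg fun σ _ => by split_ifs <;> norm_num

open Classical in
lemma sw_eq_sum (n k : ℕ) :
    (sw n k : ℝ) = ∑ σ : Fin n → Fin k, if IsSmooth σ then 1 else 0 := by
  rw [sw, Nat.card_eq_fintype_card, Fintype.card_subtype]
  simp

lemma sw_succ (n k : ℕ) : (sw (n + 1) k : ℝ) = ∑ i : Fin k, wordCount n i := by
  rw [sw_eq_sum, sum_cons]
  rfl

lemma sw_zero (k : ℕ) : (sw 0 k : ℝ) = 1 := by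
  have h (σ : Fin 0 → Fin k) : IsSmooth σ := fun m hm => absurd hm (by omega)
  simp [sw_eq_sum, h]

/-! ### The adjacency operator and convergence -/

open Classical in
/-- Sums over neighbouring letters, for a function `w` of the 1-indexed letter: the vanishing of
`w` at the fictitious letters `0` and `k + 1` makes the three-term formula uniform in `i`. -/
lemma sum_near {k : ℕ} (w : ℕ → ℝ) (h0 : w 0 = 0) (hk : w (k + 1) = 0) (i : Fin k) :
    (∑ j : Fin k, if Near i j then w (j + 1) else 0) = w i + w (i + 1) + w (i + 2) := by
  obtain ⟨i, hi⟩ := i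
  have h1 : ∀ j : Fin k, (if Near ⟨i, hi⟩ j then w (j + 1) else 0) =
      (if (j : ℕ) + 1 = i then w i else 0) + (if (j : ℕ) = i then w (i + 1) else 0) +
        (if (j : ℕ) = i + 1 then w (i + 2) else 0) := by
    intro j
    have hn : Near ⟨i, hi⟩ j ↔ (j : ℕ) + 1 = i ∨ (j : ℕ) = i ∨ (j : ℕ) = i + 1 := by
      simp only [Near, abs_le]
      omega
    rw [if_congr hn rfl rfl]
    rcases lt_trichotomy ((j : ℕ)) i with h | h | h
    · by_cases h' : (j : ℕ) + 1 = i
      · simp [h', h.ne, show (j : ℕ) ≠ i + 1 by omega]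
      · simp [h', h.ne, show (j : ℕ) ≠ i + 1 by omega]
    · simp [h]
    · by_cases h' : (j : ℕ) = i + 1
      · simp [h']; omega
      · simp [h', h.ne', show (j : ℕ) + 1 ≠ i by omega]
  rw [Finset.sum_congr rfl fun j _ => h1 j, Finset.sum_add_distrib, Finset.sum_add_distrib,
    Fin.sum_univ_eq_sum_range (fun j => if j + 1 = i then w i else 0),
    Fin.sum_univ_eq_sum_range (fun j => if j = i then w (i + 1) else 0),
    Fin.sum_univ_eq_sum_range (fun j => if j = i + 1 then w (i + 2) else 0)]
  congr 1
  · congr 1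
    · cases i with
      | zero => simp [h0]
      | succ m => simp [show m < k by omega]
    · simp [hi]
  · rw [Finset.sum_ite_eq']
    split_ifs with h
    · rfl
    · have : i + 1 = k := by simp at h; omega
      rw [show i + 2 = k + 1 by omega, hk]

open Classical in
lemma card_near_le {k : ℕ} (i : Fin k) : (∑ j : Fin k, if Near i j then (1 : ℝ) else 0) ≤ 3 := by
  have h := sum_near (k := k) (fun m => if 1 ≤ m ∧ m ≤ k then 1 else 0) (by simp) (by simp) i
  have h' : (∑ j : Fin k, if Near i j then (1 : ℝ) else 0) =
      ∑ j : Fin k, if Near i j then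
        (fun m => if 1 ≤ m ∧ m ≤ k then (1 : ℝ) else 0) ((j : ℕ) + 1) else 0 :=
    Finset.sum_congr rfl fun j _ => by
      simp [show (j : ℕ) + 1 ≤ k from j.2]
  rw [h', h]
  have h3 (m : ℕ) : (if 1 ≤ m ∧ m ≤ k then (1 : ℝ) else 0) ≤ 1 := by split_ifs <;> norm_num
  linarith [h3 (i : ℕ), h3 ((i : ℕ) + 1), h3 ((i : ℕ) + 2)]

open Classical in
/-- Any solution `g` of the linear system for the generating functions is approximated
geometrically by the partial sums: passing from `N` to `N + 1` applies `x` times the adjacency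
operator, whose sup-norm is at most `3`, to the remainder. -/
lemma remainder_bound {k : ℕ} {x M : ℝ} (hx : 0 < x) (g : Fin k → ℝ) (hM : ∀ i, |g i| ≤ M)
    (hg : ∀ i, g i = x + x * ∑ j : Fin k, if Near i j then g j else 0) (N : ℕ) (i : Fin k) :
    |g i - ∑ n ∈ range N, wordCount n i * x ^ (n + 1)| ≤ (3 * x) ^ N * M := by
  have hM0 : 0 ≤ M := (abs_nonneg _).trans (hM i)
  induction N generalizing i with
  | zero => simpa using hM i
  | succ N ih =>
    have key : g i - ∑ n ∈ range (N + 1), wordCount n i * x ^ (n + 1) =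
        x * ∑ j : Fin k, if Near i j then
          (g j - ∑ n ∈ range N, wordCount n j * x ^ (n + 1)) else 0 := by
      have h1 : ∑ n ∈ range N, wordCount (n + 1) i * x ^ (n + 1 + 1) =
          x * ∑ j : Fin k, if Near i j then
            (∑ n ∈ range N, wordCount n j * x ^ (n + 1)) else 0 := by
        simp_rw [wordCount_succ, Finset.sum_mul]
        rw [Finset.sum_comm, Finset.mul_sum]
        refine Finset.sum_congr rfl fun j _ => ?_
        split_ifs
        · rw [Finset.mul_sum]
          exact Finset.sum_congr rfl fun n _ => by ring
        · simp
      have h2 : (∑ j : Fin k, if Near i j then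
          (g j - ∑ n ∈ range N, wordCount n j * x ^ (n + 1)) else 0) =
          (∑ j : Fin k, if Near i j then g j else 0) - ∑ j : Fin k, if Near i j then
            (∑ n ∈ range N, wordCount n j * x ^ (n + 1)) else 0 := by
        rw [← Finset.sum_sub_distrib]
        exact Finset.sum_congr rfl fun j _ => by split_ifs <;> simp
      rw [Finset.sum_range_succ', h1, h2, hg i, wordCount_zero]
      ring
    rw [key, abs_mul, abs_of_pos hx]
    have h3 : |∑ j : Fin k, if Near i j then
          (g j - ∑ n ∈ range N, wordCount n j * x ^ (n + 1)) else 0| ≤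
        ∑ j : Fin k, (if Near i j then (1 : ℝ) else 0) * ((3 * x) ^ N * M) := by
      refine (Finset.abs_sum_le_sum_abs _ _).trans (Finset.sum_le_sum fun j _ => ?_)
      split_ifs
      · simpa using ih j
      · simp
    rw [← Finset.sum_mul] at h3
    have h4 : 0 ≤ (3 * x) ^ N * M := by positivity
    calc _ ≤ x * (3 * ((3 * x) ^ N * M)) := by
          gcongr
          exact h3.trans (by gcongr; exact card_near_le i)
      _ = _ := by ring

lemma hasSum_of_solution {k : ℕ} {x : ℝ} (hx : 0 < x) (hx3 : x < 1 / 3) (g : Fin k → ℝ)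
    (hg : ∀ i, g i = x + x * ∑ j : Fin k, open Classical in if Near i j then g j else 0)
    (i : Fin k) : HasSum (fun n => wordCount n i * x ^ (n + 1)) (g i) := by
  rw [hasSum_iff_tendsto_nat_of_nonneg
    (fun n => mul_nonneg (wordCount_nonneg n i) (by positivity)), tendsto_iff_norm_sub_tendsto_zero]
  have hM (i : Fin k) : |g i| ≤ ∑ j, |g j| :=
    Finset.single_le_sum (f := fun j => |g j|) (fun j _ => abs_nonneg _) (Finset.mem_univ i)
  refine squeeze_zero (fun _ => norm_nonneg _) (fun N => ?_)
    (g := fun N => (3 * x) ^ N * ∑ j, |g j|) ?_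
  · rw [Real.norm_eq_abs, abs_sub_comm]
    exact remainder_bound hx g hM hg N i
  · simpa using (tendsto_pow_atTop_nhds_zero_of_lt_one (r := 3 * x) (by positivity)
      (by linarith)).mul_const (∑ j, |g j|)

/-! ### Chebyshev polynomials and the explicit solution -/

/-- Chebyshev values with the index shifted so that `cheb t 0 = U_{-1}(t) = 0`. -/
noncomputable def cheb (t : ℝ) (m : ℕ) : ℝ := Ueval ((m : ℤ) - 1) t

lemma cheb_zero (t : ℝ) : cheb t 0 = 0 := by simp [cheb, Ueval]

lemma cheb_one (t : ℝ) : cheb t 1 = 1 := by simp [cheb, Ueval]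

lemma cheb_add_two (t : ℝ) (m : ℕ) : cheb t (m + 2) = 2 * t * cheb t (m + 1) - cheb t m := by
  have h := congrArg (Polynomial.eval t) (Polynomial.Chebyshev.U_add_two ℝ ((m : ℤ) - 1))
  simp only [Polynomial.eval_sub, Polynomial.eval_mul, Polynomial.eval_X,
    Polynomial.eval_ofNat] at h
  have e1 : ((m + 1 : ℕ) : ℤ) - 1 = (m : ℤ) - 1 + 1 := by push_cast; ring
  have e2 : ((m + 2 : ℕ) : ℤ) - 1 = (m : ℤ) - 1 + 2 := by push_cast; ring
  simp only [cheb, Ueval, e1, e2, h]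

/-- Positivity is proved together with monotonicity, which the recurrence propagates for
`t ≥ 1`. -/
lemma cheb_pos {t : ℝ} (ht : 1 ≤ t) (m : ℕ) :
    0 < cheb t (m + 1) ∧ cheb t m ≤ cheb t (m + 1) := by
  induction m with
  | zero => simp [cheb_zero, cheb_one]
  | succ m ih =>
    have h := cheb_add_two t m
    have h' : cheb t (m + 1) ≤ cheb t (m + 2) := by nlinarith
    exact ⟨ih.1.trans_le h', h'⟩

lemma sum_cheb (t : ℝ) (k : ℕ) :
    (2 * t - 2) * ∑ m ∈ range k, cheb t (m + 1) = cheb t (k + 1) - cheb t k - 1 := by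
  induction k with
  | zero => simp [cheb_zero, cheb_one]
  | succ k ih =>
    rw [Finset.sum_range_succ, mul_add, ih, cheb_add_two]
    ring

/-- The explicit solution of the linear system for the generating functions, as a function of the
1-indexed letter `m`; it vanishes at `m = 0` and `m = k + 1`. -/
noncomputable def sol (k : ℕ) (x t : ℝ) (m : ℕ) : ℝ :=
  x / (1 - 3 * x) * (1 - (cheb t m + cheb t (k + 1 - m)) / cheb t (k + 1))

open Classical in
lemma sol_eq {k : ℕ} {x t : ℝ} (hx : 0 < x) (hx3 : x < 1 / 3) (ht : t = (1 - x) / (2 * x))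
    (hU : cheb t (k + 1) ≠ 0) (i : Fin k) :
    sol k x t (i + 1) = x + x * ∑ j : Fin k, if Near i j then sol k x t (j + 1) else 0 := by
  rw [sum_near (sol k x t) (by simp [sol, cheb_zero, hU]) (by simp [sol, cheb_zero, hU])]
  obtain ⟨i, hi⟩ := i
  obtain ⟨d, rfl⟩ : ∃ d, k = i + 1 + d := ⟨k - (i + 1), by omega⟩
  have hx' : 1 - x * 3 ≠ 0 := by linarith
  have e0 : i + 1 + d + 1 - i = d + 2 := by omega
  have e1 : i + 1 + d + 1 - (i + 1) = d + 1 := by omega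
  have e2 : i + 1 + d + 1 - (i + 2) = d := by omega
  have ht' : 2 * t * x = 1 - x := by rw [ht]; field_simp
  simp only [sol, e0, e1, e2, cheb_add_two]
  generalize cheb t (i + 1 + d + 1) = D at hU ⊢
  field_simp
  linear_combination (cheb t (d + 1) + cheb t (i + 1)) * ht'

lemma sum_sol {k : ℕ} {x t : ℝ} (hx : 0 < x) (hx3 : x < 1 / 3) (ht : t = (1 - x) / (2 * x))
    (hU : cheb t (k + 1) ≠ 0) :
    ∑ i : Fin k, sol k x t (i + 1) = x * ((k : ℝ) - (3 * (k : ℝ) + 2) * x) / (1 - 3 * x) ^ 2 +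
        (2 * x ^ 2 / (1 - 3 * x) ^ 2) * (1 + cheb t k) / cheb t (k + 1) := by
  have hx' : 1 - x * 3 ≠ 0 := by linarith
  have hS : ∑ m ∈ range k, cheb t (m + 1) =
      x / (1 - 3 * x) * (cheb t (k + 1) - cheb t k - 1) := by
    have h2 : 2 * t - 2 = (1 - 3 * x) / x := by rw [ht]; field_simp; ring
    rw [← sum_cheb, h2]
    field_simp
  -- The map `m ↦ k - 1 - m` identifies the two Chebyshev sums.
  have hR : ∑ m ∈ range k, cheb t (k + 1 - (m + 1)) = ∑ m ∈ range k, cheb t (m + 1) := by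
    rw [← Finset.sum_range_reflect (fun m => cheb t (m + 1))]
    refine Finset.sum_congr rfl fun m hm => ?_
    have := Finset.mem_range.1 hm
    congr 1
    omega
  rw [Fin.sum_univ_eq_sum_range (fun m => sol k x t (m + 1))]
  simp only [sol]
  rw [← Finset.mul_sum, Finset.sum_sub_distrib, ← Finset.sum_div, Finset.sum_add_distrib, hR, hS]
  simp only [Finset.sum_const, Finset.card_range, nsmul_eq_mul, mul_one]
  field_simp
  ring

/-- Theorem 2.1: generating function for the number of smooth words. -/
theorem smooth_words_gf (k : ℕ) (hk : 1 ≤ k) (x : ℝ) (hx0 : 0 < x) (hx3 : x < 1 / 3) :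
    HasSum (fun n : ℕ => (sw n k : ℝ) * x ^ n)
      (1 + x * ((k : ℝ) - (3 * (k : ℝ) + 2) * x) / (1 - 3 * x) ^ 2 +
        (2 * x ^ 2 / (1 - 3 * x) ^ 2) *
          (1 + Ueval ((k : ℤ) - 1) ((1 - x) / (2 * x))) /
            Ueval (k : ℤ) ((1 - x) / (2 * x))) := by
  set t := (1 - x) / (2 * x) with ht
  have ht1 : 1 ≤ t := by
    rw [ht, le_div_iff₀ (by positivity)]
    linarith
  have hU : cheb t (k + 1) ≠ 0 := (cheb_pos ht1 k).1.ne'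
  have hs : HasSum (fun n => (sw (n + 1) k : ℝ) * x ^ (n + 1)) (∑ i : Fin k, sol k x t (i + 1)) := by
    simp_rw [sw_succ, Finset.sum_mul]
    exact hasSum_sum fun i _ =>
      hasSum_of_solution hx0 hx3 (fun i : Fin k => sol k x t (i + 1)) (sol_eq hx0 hx3 ht hU) i
  have hk1 : cheb t (k + 1) = Ueval (k : ℤ) t := by simp [cheb]
  rw [sum_sol hx0 hx3 ht hU, hk1] at hs
  have h := (hasSum_nat_add_iff (f := fun n : ℕ => (sw n k : ℝ) * x ^ n) 1).1 hs
  rw [Finset.sum_range_one, sw_zero, pow_zero, mul_one, add_comm, ← add_assoc] at h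
  exact h
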